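/- arXiv:1607.05121 — 2 statements merged into one kernel-verified Lean document; each statement's English description precedes it below -/
import Mathlib

section
/- Let λ be a complex number and let k ≤ r be nonnegative integers. Define the operator L on infinitely differentiable functions ℝ → ℂ by (L f)(t) = f′(t) − λ · f(t). Then the k-fold iterate L^k applied to the function t ↦ t^r · exp(λt) equals t ↦ q(t) · exp(λt) for some polynomial q with complex coefficients of degree exactly r − k. -/
open Polynomial

/-!
The operator `L f = f' - c f` is differentiation conjugated by `exp (c t)`: it sends
`p(t) exp (c t)` to `p'(t) exp (c t)`. Hence each application of `L` differentiates the polynomial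
factor, which in characteristic zero lowers a positive degree by exactly one.
-/

lemma degree_iterate_derivative {R : Type*} [Semiring R] [IsAddTorsionFree R] {p : R[X]}
    (hp : p ≠ 0) {k : ℕ} (hk : k ≤ p.natDegree) :
    (derivative^[k] p).degree = ((p.natDegree - k : ℕ) : WithBot ℕ) := by
  induction k with
  | zero => exact degree_eq_natDegree hp
  | succ k ih =>
    have hdeg : (derivative^[k] p).natDegree = p.natDegree - k :=
      natDegree_eq_of_degree_eq_some (ih (by lia))
    rw [Function.iterate_succ_apply', degree_derivative (by lia), hdeg, Nat.sub_sub]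

section TwistedDerivative

variable {𝕜 A : Type*} [NontriviallyNormedField 𝕜] [NormedCommRing A] [NormedAlgebra 𝕜 A]

/-- The first-order differential operator `f ↦ f' - c f` with constant coefficient `c`, on functions
of one variable with values in a normed algebra. Where `f` is not differentiable, the
value is `-c f`. -/
noncomputable def derivSubMul (c : A) (f : 𝕜 → A) : 𝕜 → A :=
  fun t => deriv f t - c * f t

/-- The quasi-polynomial `t ↦ p(t) e(t)` with polynomial factor `p`. The exponential factor is an
arbitrary function `e`, so that any solution of `e' = c e` can play this role. -/
def quasiPolynomial (e : 𝕜 → A) (p : A[X]) : 𝕜 → A :=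
  fun t => p.eval (algebraMap 𝕜 A t) * e t

lemma hasDerivAt_eval_algebraMap (p : A[X]) (t : 𝕜) :
    HasDerivAt (fun s : 𝕜 => p.eval (algebraMap 𝕜 A s))
      (p.derivative.eval (algebraMap 𝕜 A t)) t := by
  have halg : HasDerivAt (algebraMap 𝕜 A) 1 t := by
    simpa using! (algebraMapCLM 𝕜 A).hasDerivAt
  induction p using Polynomial.induction_on' with
  | add p q hp hq => simpa using! hp.add hq
  | monomial n a =>
    simpa [mul_assoc, derivative_monomial] using! (halg.pow n).const_mul a

lemma derivSubMul_mul_of_hasDerivAt {c : A} {e g : 𝕜 → A} {g' : A} {t : 𝕜}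
    (hg : HasDerivAt g g' t) (he : HasDerivAt e (c * e t) t) :
    derivSubMul c (fun s => g s * e s) t = g' * e t := by
  rw [derivSubMul, (hg.fun_mul he).deriv]
  ring

lemma semiconj_quasiPolynomial_derivative_derivSubMul {c : A} {e : 𝕜 → A}
    (he : ∀ t, HasDerivAt e (c * e t) t) :
    Function.Semiconj (quasiPolynomial e) derivative (derivSubMul c) := fun p =>
  funext fun t =>
    (derivSubMul_mul_of_hasDerivAt (hasDerivAt_eval_algebraMap p t) (he t)).symm

lemma iterate_derivSubMul_quasiPolynomial {c : A} {e : 𝕜 → A}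
    (he : ∀ t, HasDerivAt e (c * e t) t) (k : ℕ) (p : A[X]) :
    (derivSubMul c)^[k] (quasiPolynomial e p) = quasiPolynomial e (derivative^[k] p) :=
  ((semiconj_quasiPolynomial_derivative_derivSubMul he).iterate_right k p).symm

end TwistedDerivative

lemma hasDerivAt_cexp_mul_ofReal (c : ℂ) (t : ℝ) :
    HasDerivAt (fun s : ℝ => Complex.exp (c * s)) (c * Complex.exp (c * t)) t := by
  rw [mul_comm c (Complex.exp _)]
  exact (hasDerivAt_const_mul c).cexp.comp_ofReal

/-- For `k ≤ r`, applying the `k`-fold iterate of `L f = f' - c • f` to `t ↦ t ^ r * exp (c t)`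
gives `t ↦ q t * exp (c t)` for some polynomial `q` of degree exactly `r - k`. -/
theorem stmt_9 (c : ℂ) (k r : ℕ) (hkr : k ≤ r) :
    ∃ q : Polynomial ℂ, q.degree = ((r - k : ℕ) : WithBot ℕ) ∧
      (fun f : ℝ → ℂ => fun t => deriv f t - c * f t)^[k]
          (fun t : ℝ => (t : ℂ) ^ r * Complex.exp (c * t)) =
        fun t : ℝ => q.eval (t : ℂ) * Complex.exp (c * t) := by
  have hX : quasiPolynomial (fun t : ℝ => Complex.exp (c * t)) (X ^ r) =
      fun t : ℝ => (t : ℂ) ^ r * Complex.exp (c * t) := by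
    funext t
    simp [quasiPolynomial]
  refine ⟨derivative^[k] (X ^ r), ?_, ?_⟩
  · simpa using degree_iterate_derivative (pow_ne_zero r (X_ne_zero (R := ℂ))) (by simpa using hkr)
  · rw [← hX]
    exact iterate_derivSubMul_quasiPolynomial (hasDerivAt_cexp_mul_ofReal c) k (X ^ r)
end

section
/- Let V be a subspace of the space of complex sequences that is invariant under the shift operator S, let λ be a nonzero complex number, let l be a positive integer, and suppose V contains a sequence of the form n ↦ p(n) · λ^n where p is a polynomial with complex coefficients of degree exactly l − 1. Then G_{λ,l} ⊆ V. -/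
open Polynomial

/-- The linear map sending a polynomial `p` to the sequence `n ↦ c ^ n * p n`. -/
noncomputable def seqOfPoly (c : ℂ) : Polynomial ℂ →ₗ[ℂ] (ℕ → ℂ) where
  toFun p := fun n => c ^ n * p.eval (n : ℂ)
  map_add' p q := by funext n; simp [mul_add]
  map_smul' a p := by funext n; simp; ring

/-- `G c m` is the space of sequences `n ↦ c ^ n * p n` with `p` a polynomial of degree `< m`. -/
noncomputable def G (c : ℂ) (m : ℕ) : Submodule ℂ (ℕ → ℂ) :=
  (Polynomial.degreeLT ℂ m).map (seqOfPoly c)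

/-- The shift operator on complex sequences, `(S y) n = y (n + 1)`. -/
def shiftOp : Module.End ℂ (ℕ → ℂ) where
  toFun y := fun n => y (n + 1)
  map_add' _ _ := rfl
  map_smul' _ _ := rfl

/-!
Pull `V` back along `seqOfPoly c` to a space `W` of polynomials. As `c ≠ 0`, shift invariance of `V`
makes `W` stable under `p(X) ↦ p(X + 1)`, hence under the forward difference
`p(X) ↦ p(X + 1) - p(X)`. In characteristic zero the difference lowers the degree of a nonconstant
polynomial by exactly one, so a single element of degree `d` in `W` yields elements of every degree
`≤ d`, and these span all polynomials of degree `≤ d`.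
-/

lemma coeff_taylor_of_natDegree_le_succ {R : Type*} [CommSemiring R] (r : R) {p : R[X]} {k : ℕ}
    (hp : p.natDegree ≤ k + 1) :
    (taylor r p).coeff k = p.coeff k + (k + 1) * p.coeff (k + 1) * r := by
  have hlin : (hasseDeriv k p).natDegree < 2 := by
    have := natDegree_hasseDeriv_le p k
    lia
  rw [taylor_coeff, eval_eq_sum_range' hlin]
  simp [Finset.sum_range_succ, hasseDeriv_coeff, add_comm 1 k]

lemma degree_taylor_sub_self {R : Type*} [CommRing R] [NoZeroDivisors R] [CharZero R] {r : R}
    (hr : r ≠ 0) {p : R[X]} {k : ℕ} (hp : p.degree = (k + 1 : ℕ)) :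
    (taylor r p - p).degree = k := by
  have hp0 : p ≠ 0 := degree_ne_bot.mp (hp.trans_ne (WithBot.natCast_ne_bot _))
  have hlt : (taylor r p - p).degree < (k + 1 : ℕ) := by
    rw [← hp]
    exact degree_sub_lt_right (degree_taylor p r) hp0 (leadingCoeff_taylor r p)
  have hcoeff : (taylor r p - p).coeff k = (k + 1) * p.coeff (k + 1) * r := by
    rw [coeff_sub, coeff_taylor_of_natDegree_le_succ r (natDegree_le_of_degree_le hp.le),
      add_sub_cancel_left]
  refine degree_eq_of_le_of_coeff_ne_zero (Order.le_of_lt_succ hlt) ?_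
  rw [hcoeff]
  exact mul_ne_zero (mul_ne_zero k.cast_add_one_ne_zero (coeff_ne_zero_of_eq_degree hp)) hr

lemma degreeLT_le_of_forall_exists_degree_eq {K : Type*} [DivisionRing K]
    {W : Submodule K K[X]} {n : ℕ} (h : ∀ i < n, ∃ p ∈ W, p.degree = i) : degreeLT K n ≤ W := by
  choose f hfW hfdeg using h
  let S : Polynomial.Sequence K :=
    { elems' i := if hi : i < n then f i hi else X ^ i
      degree_eq' i := by split_ifs with hi <;> simp [hfdeg] }
  have hSW : ∀ i < n, S i ∈ W := fun i hi ↦ by simpa only [S, dif_pos hi] using hfW i hi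
  rw [← S.span_degreeLT fun i _ ↦ (leadingCoeff_ne_zero.mpr (S.ne_zero i)).isUnit,
    Submodule.span_le]
  exact Set.image_subset_iff.mpr hSW

lemma exists_mem_degree_eq_of_forall_taylor_mem {R : Type*} [CommRing R] [NoZeroDivisors R]
    [CharZero R] {r : R} (hr : r ≠ 0) {W : Submodule R R[X]} (hW : ∀ q ∈ W, taylor r q ∈ W)
    {p : R[X]} (hpW : p ∈ W) {d : ℕ} (hp : p.degree = d) {i : ℕ} (hi : i ≤ d) :
    ∃ q ∈ W, q.degree = i := by
  induction hi using Nat.decreasingInduction with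
  | self => exact ⟨p, hpW, hp⟩
  | of_succ k _ ih =>
    obtain ⟨q, hqW, hq⟩ := ih
    exact ⟨taylor r q - q, W.sub_mem (hW q hqW) hqW, degree_taylor_sub_self hr hq⟩

lemma degreeLT_succ_le_of_forall_taylor_mem {K : Type*} [Field K] [CharZero K] {r : K} (hr : r ≠ 0)
    {W : Submodule K K[X]} (hW : ∀ q ∈ W, taylor r q ∈ W) {p : K[X]} (hpW : p ∈ W) {d : ℕ}
    (hp : p.degree = d) : degreeLT K (d + 1) ≤ W :=
  degreeLT_le_of_forall_exists_degree_eq fun _ hi ↦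
    exists_mem_degree_eq_of_forall_taylor_mem hr hW hpW hp (Nat.le_of_lt_succ hi)

lemma shiftOp_seqOfPoly (c : ℂ) (p : ℂ[X]) :
    shiftOp (seqOfPoly c p) = c • seqOfPoly c (taylor 1 p) := by
  funext n
  simp [shiftOp, seqOfPoly, taylor_eval, pow_succ', mul_assoc]

/-- A shift-invariant subspace of sequences containing `n ↦ p n * c ^ n` with `p` of degree
exactly `l - 1` contains all of `G c l`. -/
theorem stmt_11 (V : Submodule ℂ (ℕ → ℂ)) (hinv : ∀ y ∈ V, shiftOp y ∈ V)
    (c : ℂ) (hc : c ≠ 0) (l : ℕ) (hl : 0 < l)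
    (p : Polynomial ℂ) (hp : p.degree = ((l - 1 : ℕ) : WithBot ℕ))
    (hpV : (fun n : ℕ => p.eval (n : ℂ) * c ^ n) ∈ V) :
    G c l ≤ V := by
  obtain ⟨d, rfl⟩ := Nat.exists_eq_add_one_of_ne_zero hl.ne'
  have hpW : p ∈ V.comap (seqOfPoly c) := by
    simpa only [Submodule.mem_comap, seqOfPoly, LinearMap.coe_mk, AddHom.coe_mk, mul_comm] using hpV
  have hW : ∀ q ∈ V.comap (seqOfPoly c), taylor 1 q ∈ V.comap (seqOfPoly c) := fun q hq ↦ by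
    have hshift := hinv _ hq
    rwa [shiftOp_seqOfPoly, V.smul_mem_iff hc] at hshift
  exact Submodule.map_le_iff_le_comap.mpr
    (degreeLT_succ_le_of_forall_taylor_mem one_ne_zero hW hpW hp)
end
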